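/- arXiv:2512.05761 — 3 statements merged into one kernel-verified Lean document; each statement's English description precedes it below -/
import Mathlib

section
/- Maassen–Uffink relation for mixed states (state-independent benchmark for the unassisted dephasing cost). Let d ≥ 1, let ρ be a d×d complex matrix that is positive semidefinite with trace 1, and let u, v be two orthonormal bases of EuclideanSpace ℂ (Fin d). Define the dephasing distributions q(k) = Re ⟪u k, ρ (u k)⟫ and r(ℓ) = Re ⟪v ℓ, ρ (v ℓ)⟫ (where ρ acts via Matrix.toEuclideanLin), and let c = max over k, ℓ of ‖⟪u k, v ℓ⟫‖. Then (1/2)·(H(q) + H(r)) ≥ −log₂ c, where H is the base-2 Shannon entropy. -/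
open scoped ComplexOrder

/-- Base-2 Shannon entropy of a finitely supported probability vector,
with the convention `0 · log₂ 0 = 0`. -/
noncomputable def shannonEntropy2 {n : ℕ} (q : Fin n → ℝ) : ℝ :=
  ∑ k, Real.negMulLog (q k) / Real.log 2


lemma mu_sumsq {d : ℕ} {E : Type*} [NormedAddCommGroup E] [InnerProductSpace ℂ E]
    (a : Fin d → E) (T : Fin d → Fin d → ℂ)
    (hT : ∀ k k', ∑ l, (starRingEnd ℂ) (T k l) * T k' l = if k = k' then 1 else 0) :
    ∑ l, ‖∑ k, T k l • a k‖ ^ 2 = ∑ k, ‖a k‖ ^ 2 := by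
  have h : (∑ l, ((‖∑ k, T k l • a k‖ : ℂ)) ^ 2) = ∑ k, (‖a k‖ : ℂ) ^ 2 := by
    have h1 : ∀ x : E, (‖x‖ : ℂ) ^ 2 = inner ℂ x x := fun x => (inner_self_eq_norm_sq_to_K x).symm
    simp only [h1, sum_inner, inner_sum, inner_smul_left, inner_smul_right, Finset.mul_sum]
    rw [Finset.sum_comm]
    refine Finset.sum_congr rfl fun k _ => ?_
    rw [Finset.sum_comm]
    have : ∀ k', ∑ l, T k l * ((starRingEnd ℂ) (T k' l) * inner ℂ (a k') (a k))
        = (if k' = k then 1 else 0) * inner ℂ (a k') (a k) := by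
      intro k'
      rw [← hT, Finset.sum_mul]
      exact Finset.sum_congr rfl fun l _ => by ring
    simp [this]
  exact_mod_cast h

lemma mu_core {d : ℕ} {E : Type*} [NormedAddCommGroup E] [InnerProductSpace ℂ E]
    (a b : Fin d → E) (T : Fin d → Fin d → ℂ)
    (hT : ∀ k k', ∑ l, (starRingEnd ℂ) (T k l) * T k' l = if k = k' then 1 else 0)
    (hb : ∀ l, b l = ∑ k, T k l • a k) (ha : ∀ k, a k = ∑ l, (starRingEnd ℂ) (T k l) • b l)
    (hs : ∑ k, ‖a k‖ ^ 2 = 1) (c : ℝ) (hc0 : 0 < c) (hc : ∀ k l, ‖T k l‖ ≤ c) :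
    ∑ k, ‖a k‖ ^ 2 * Real.log (‖a k‖ ^ 2) + ∑ l, ‖b l‖ ^ 2 * Real.log (‖b l‖ ^ 2)
      ≤ 2 * Real.log c := by
  have hsb : ∑ l, ‖b l‖ ^ 2 = 1 := by
    simp only [hb]; rw [mu_sumsq a T hT, hs]
  set m : Fin d → Fin d → ℂ := fun k l => T k l * inner ℂ (b l) (a k) with hm
  have hm1 : ∀ k, ∑ l, m k l = ((‖a k‖ ^ 2 : ℝ) : ℂ) := by
    intro k
    have : inner ℂ (a k) (a k) = ((‖a k‖ ^ 2 : ℝ) : ℂ) := by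
      rw [inner_self_eq_norm_sq_to_K]; norm_cast
    rw [← this]
    conv_rhs => rw [show inner ℂ (a k) (a k) = inner ℂ (∑ l, (starRingEnd ℂ) (T k l) • b l) (a k) by rw [← ha k]]
    simp [sum_inner, inner_smul_left, hm, mul_comm]
  have hm2 : ∀ l, ∑ k, m k l = ((‖b l‖ ^ 2 : ℝ) : ℂ) := by
    intro l
    have : inner ℂ (b l) (b l) = ((‖b l‖ ^ 2 : ℝ) : ℂ) := by
      rw [inner_self_eq_norm_sq_to_K]; norm_cast
    rw [← this]
    conv_rhs => rw [show inner ℂ (b l) (b l) = inner ℂ (b l) (∑ k, T k l • a k) by rw [← hb l]]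
    simp [inner_sum, inner_smul_right, hm]
  set A : Fin d → ℝ := fun k => Real.log (‖a k‖) with hA
  set B : Fin d → ℝ := fun l => Real.log (‖b l‖) with hB
  set F : ℂ → ℂ := fun z => ∑ l, ∑ k, Complex.exp (z * A k) * Complex.exp (z * B l) * m k l with hF
  have hdiff : Differentiable ℂ F := by
    simp only [hF]; fun_prop
  have nexp : ∀ (z : ℂ) (t : ℝ), ‖Complex.exp (z * t)‖ = Real.exp (z.re * t) := by
    intro z t; rw [Complex.norm_exp]; simp
  have hbdd : BddAbove ((norm ∘ F) '' Complex.HadamardThreeLines.verticalClosedStrip 0 1) := by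
    refine ⟨∑ l, ∑ k, Real.exp |A k| * Real.exp |B l| * ‖m k l‖, ?_⟩
    rintro _ ⟨z, hz, rfl⟩
    have hz' : 0 ≤ z.re ∧ z.re ≤ 1 := hz
    have key : ∀ t : ℝ, z.re * t ≤ |t| := fun t => by
      calc z.re * t ≤ |z.re * t| := le_abs_self _
        _ = z.re * |t| := by rw [abs_mul, abs_of_nonneg hz'.1]
        _ ≤ 1 * |t| := by gcongr; exact hz'.2
        _ = |t| := one_mul _
    refine (norm_sum_le _ _).trans (Finset.sum_le_sum fun l _ => ?_)
    refine (norm_sum_le _ _).trans (Finset.sum_le_sum fun k _ => ?_)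
    rw [norm_mul, norm_mul, nexp, nexp]
    gcongr <;> exact key _
  have h0 : ∀ z ∈ Complex.re ⁻¹' {(0:ℝ)}, ‖F z‖ ≤ 1 := by
    intro z hz
    have hz : z.re = 0 := hz
    set w : Fin d → E := fun l => ∑ k, T k l • (Complex.exp (z * A k) • a k) with hw
    have hw2 : ∑ l, ‖w l‖ ^ 2 = 1 := by
      simp only [hw]
      rw [mu_sumsq _ T hT, ← hs]
      refine Finset.sum_congr rfl fun k _ => ?_
      rw [norm_smul, nexp, hz]; simp
    have e : F z = ∑ l, Complex.exp (z * B l) * inner ℂ (b l) (w l) := by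
      simp only [hF, hw, hm, inner_sum, inner_smul_right, Finset.mul_sum]
      refine Finset.sum_congr rfl fun l _ => Finset.sum_congr rfl fun k _ => by ring
    rw [e]
    calc _ ≤ ∑ l, ‖Complex.exp (z * B l) * inner ℂ (b l) (w l)‖ := norm_sum_le _ _
      _ ≤ ∑ l, (‖b l‖ ^ 2 / 2 + ‖w l‖ ^ 2 / 2) := by
        refine Finset.sum_le_sum fun l _ => ?_
        rw [norm_mul, nexp, hz]
        have := norm_inner_le_norm (𝕜 := ℂ) (b l) (w l)
        simp only [zero_mul, Real.exp_zero, one_mul]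
        nlinarith [sq_nonneg (‖b l‖ - ‖w l‖)]
      _ = 1 := by
        rw [Finset.sum_add_distrib, ← Finset.sum_div, ← Finset.sum_div, hsb, hw2]; norm_num
  have h1 : ∀ z ∈ Complex.re ⁻¹' {(1:ℝ)}, ‖F z‖ ≤ c := by
    intro z hz
    have hz : z.re = 1 := hz
    calc _ ≤ ∑ l, ∑ k, c * (‖a k‖ ^ 2 * ‖b l‖ ^ 2) := by
          refine (norm_sum_le _ _).trans (Finset.sum_le_sum fun l _ => ?_)
          refine (norm_sum_le _ _).trans (Finset.sum_le_sum fun k _ => ?_)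
          rw [norm_mul, norm_mul, nexp, nexp, hz]
          simp only [hm, one_mul, norm_mul]
          have hi := norm_inner_le_norm (𝕜 := ℂ) (b l) (a k)
          rcases eq_or_lt_of_le (norm_nonneg (a k)) with h | h
          · have : a k = 0 := norm_eq_zero.mp h.symm
            simp [this]
          rcases eq_or_lt_of_le (norm_nonneg (b l)) with h' | h'
          · have : b l = 0 := norm_eq_zero.mp h'.symm
            simp [this]
          simp only [hA, hB]
          rw [Real.exp_log h, Real.exp_log h']
          calc _ ≤ ‖a k‖ * ‖b l‖ * (c * (‖b l‖ * ‖a k‖)) := by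
                gcongr; exact hc k l
            _ = _ := by ring
      _ = c := by
          simp only [← Finset.mul_sum, ← Finset.sum_mul, hs, hsb]; simp
  have hint : ∀ x : ℝ, 0 ≤ x → x ≤ 1 → (F x).re ≤ c ^ x := by
    intro x hx hx'
    have := Complex.HadamardThreeLines.norm_le_interp_of_mem_verticalClosedStrip₀₁' F (z := (x:ℂ))
      (a := 1) (b := c) (by simp [Complex.HadamardThreeLines.verticalClosedStrip, hx, hx'])
      hdiff.diffContOnCl hbdd h0 h1
    simp at this
    exact (Complex.re_le_norm _).trans this
  set D : ℂ := ∑ l, ∑ k, ((A k : ℂ) + B l) * m k l with hD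
  have hFd : HasDerivAt F D ((0:ℝ):ℂ) := by
    simp only [hF, hD]
    refine HasDerivAt.fun_sum fun l _ => HasDerivAt.fun_sum fun k _ => ?_
    have e1 : ∀ t : ℝ, HasDerivAt (fun z : ℂ => Complex.exp (z * t)) t ((0:ℝ):ℂ) := by
      intro t
      have := ((hasDerivAt_id ((0:ℝ):ℂ)).mul_const (t:ℂ)).cexp
      simpa using this
    have := ((e1 (A k)).mul (e1 (B l))).mul_const (m k l)
    simpa using this
  have hg : HasDerivAt (fun x : ℝ => (F x).re - c ^ x) (D.re - Real.log c) 0 := by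
    have h2 := (Real.hasStrictDerivAt_const_rpow hc0 0).hasDerivAt
    have h3 := hFd.real_of_complex.fun_sub h2
    rw [Real.rpow_zero, one_mul] at h3
    exact h3
  have hF0 : (F ((0:ℝ):ℂ)).re - c ^ (0:ℝ) = 0 := by
    simp only [hF]
    simp [hm2]
    have := hsb
    norm_cast
    linarith
  have hle : D.re - Real.log c ≤ 0 := by
    have ht := hg.tendsto_slope.mono_left
      (nhdsWithin_mono (0:ℝ) (show Set.Ioi (0:ℝ) ⊆ {0}ᶜ from fun x hx => ne_of_gt hx))
    refine le_of_tendsto ht ?_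
    filter_upwards [Ioo_mem_nhdsGT (zero_lt_one (α := ℝ))] with x hx
    rw [slope_def_field, hF0]
    have := hint x hx.1.le hx.2.le
    apply div_nonpos_of_nonpos_of_nonneg <;> linarith [hx.1]
  have hDv : D = ((∑ k, ‖a k‖ ^ 2 * A k + ∑ l, ‖b l‖ ^ 2 * B l : ℝ) : ℂ) := by
    simp only [hD, add_mul, Finset.sum_add_distrib]
    rw [Finset.sum_comm]
    simp only [← Finset.mul_sum, hm1, hm2]
    push_cast
    simp only [mul_comm]
  rw [hDv, Complex.ofReal_re] at hle
  simp only [Real.log_pow]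
  push_cast
  simp only [mul_left_comm _ (2:ℝ), ← Finset.mul_sum]
  linarith


/-- Maassen–Uffink relation for mixed states: the average unassisted erasure cost
after random dephasing in two orthonormal bases is lower bounded by the
state-independent complementarity benchmark `−log₂ c`. -/
theorem maassen_uffink_mixed
    (d : ℕ) (hd : 1 ≤ d)
    (ρ : Matrix (Fin d) (Fin d) ℂ)
    (hρ : ρ.PosSemidef) (htr : ρ.trace = 1)
    (u v : OrthonormalBasis (Fin d) ℂ (EuclideanSpace ℂ (Fin d)))
    (q r : Fin d → ℝ)
    (hq : ∀ k, q k = (inner (𝕜 := ℂ) (u k) (Matrix.toEuclideanLin ρ (u k))).re)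
    (hr : ∀ l, r l = (inner (𝕜 := ℂ) (v l) (Matrix.toEuclideanLin ρ (v l))).re)
    (c : ℝ)
    (hc : IsGreatest {x : ℝ | ∃ k l, x = ‖(inner (𝕜 := ℂ) (u k) (v l))‖} c) :
    (1 / 2) * (shannonEntropy2 q + shannonEntropy2 r) ≥ -Real.logb 2 c := by
  obtain ⟨B, rfl⟩ : ∃ B : Matrix (Fin d) (Fin d) ℂ, ρ = B.conjTranspose * B := by
    open scoped MatrixOrder Matrix.Norms.L2Operator in
    exact CStarAlgebra.nonneg_iff_eq_star_mul_self.mp hρ.nonneg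
  have hin : ∀ x, inner ℂ x (Matrix.toEuclideanLin (B.conjTranspose * B) x)
      = ((‖Matrix.toEuclideanLin B x‖ ^ 2 : ℝ) : ℂ) := by
    intro x
    have h1 : Matrix.toEuclideanLin (B.conjTranspose * B) x
        = Matrix.toEuclideanLin B.conjTranspose (Matrix.toEuclideanLin B x) := by
      simp [Matrix.toEuclideanLin]
    rw [h1, Matrix.toEuclideanLin_conjTranspose_eq_adjoint, LinearMap.adjoint_inner_right,
      inner_self_eq_norm_sq_to_K]
    norm_cast
  simp only [hin, Complex.ofReal_re] at hq hr
  have hs : ∑ k, ‖Matrix.toEuclideanLin B (u k)‖ ^ 2 = 1 := by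
    have h1 := LinearMap.trace_eq_sum_inner (Matrix.toEuclideanLin (B.conjTranspose * B)) u
    simp only [hin] at h1
    have h2 : LinearMap.trace ℂ _ (Matrix.toEuclideanLin (B.conjTranspose * B)) = 1 := by
      rw [← htr]
      exact Matrix.trace_toLin_eq _ (PiLp.basisFun 2 ℂ (Fin d))
    rw [h2] at h1
    exact_mod_cast h1.symm
  have hcle : ∀ k l, ‖(inner ℂ (u k) (v l))‖ ≤ c := fun k l => hc.2 ⟨k, l, rfl⟩
  have hc0 : 0 < c := by
    by_contra hneg
    have hz : ∀ k, (inner ℂ (u k) (v ⟨0, hd⟩)) = 0 := fun k =>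
      norm_le_zero_iff.mp ((hcle k _).trans (not_lt.mp hneg))
    have h1 := u.sum_repr' (v ⟨0, hd⟩)
    simp only [hz, zero_smul, Finset.sum_const_zero] at h1
    have h2 := v.norm_eq_one ⟨0, hd⟩
    rw [← h1] at h2
    simp at h2
  have main := mu_core (fun k => Matrix.toEuclideanLin B (u k))
    (fun l => Matrix.toEuclideanLin B (v l)) (fun k l => inner ℂ (u k) (v l))
    (by
      intro k k'
      simp only [inner_conj_symm]
      have h1 := v.sum_inner_mul_inner (u k') (u k)
      have h2 := orthonormal_iff_ite.mp u.orthonormal k' k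
      rw [h2] at h1
      rw [if_congr (eq_comm (a := k)) rfl rfl, ← h1]
      exact Finset.sum_congr rfl fun l _ => mul_comm _ _)
    (by
      intro l
      simp only [← map_smul, ← map_sum]
      rw [u.sum_repr'])
    (by
      intro k
      simp only [inner_conj_symm, ← map_smul, ← map_sum]
      rw [v.sum_repr'])
    hs c hc0 hcle
  simp only [← hq, ← hr] at main
  have e : ∀ p : Fin d → ℝ, shannonEntropy2 p = -(∑ k, p k * Real.log (p k)) / Real.log 2 := by
    intro p
    simp [shannonEntropy2, Real.negMulLog, ← Finset.sum_div]
  rw [e, e, Real.logb, ge_iff_le, ← sub_nonneg]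
  have hl : 0 < Real.log 2 := Real.log_pos one_lt_two
  have : 1 / 2 * (-(∑ k, q k * Real.log (q k)) / Real.log 2 + -(∑ k, r k * Real.log (r k)) / Real.log 2)
      - -(Real.log c / Real.log 2) = (2 * Real.log c - (∑ k, q k * Real.log (q k) + ∑ k, r k * Real.log (r k))) / 2 / Real.log 2 := by
    ring
  rw [this]
  apply div_nonneg _ hl.le
  linarith
end

section
/- Theorem 2 (thermodynamic bound for local-hidden-state models). Let d ≥ 1 and let Λ be a finite index set. Let p : Λ → ℝ be a probability distribution (p(λ) ≥ 0 and Σ_λ p(λ) = 1) and for each λ let ρ_λ be a d×d complex matrix that is positive semidefinite with trace 1. Let u, v be two orthonormal bases of EuclideanSpace ℂ (Fin d), and define for each λ the dephasing distributions q_λ(k) = Re ⟪u k, ρ_λ (u k)⟫ and r_λ(ℓ) = Re ⟪v ℓ, ρ_λ (v ℓ)⟫ (with ρ_λ acting via Matrix.toEuclideanLin). Let c = max over k, ℓ of ‖⟪u k, v ℓ⟫‖. Then the average assisted erasure cost of the local-hidden-state model satisfies (1/2)·Σ_λ p(λ)·(H(q_λ) + H(r_λ)) ≥ −log₂ c, where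 H is the base-2 Shannon entropy. -/
open scoped ComplexOrder

open Complex in
theorem mu_left {d : ℕ} (u v : OrthonormalBasis (Fin d) ℂ (EuclideanSpace ℂ (Fin d)))
    (X Y : Fin d → EuclideanSpace ℂ (Fin d)) (hX : ∑ k, ‖X k‖ ^ 2 = 1) (hY : ∑ k, ‖Y k‖ ^ 2 = 1)
    (w w' : Fin d → ℂ) (hw : ∀ k, ‖w k‖ = 1) (hw' : ∀ k, ‖w' k‖ = 1) :
    ‖∑ k, ∑ l, (w k * w' l) * (inner ℂ (u k) (v l) * inner ℂ (Y l) (X k))‖ ≤ 1 := by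
  let a : Fin d → EuclideanSpace ℂ (Fin d) := fun i => ∑ k, (starRingEnd ℂ) (w k * X k i) • u k
  let b : Fin d → EuclideanSpace ℂ (Fin d) := fun i =>
    ∑ l, (w' l * (starRingEnd ℂ) (Y l i)) • v l
  have nrm : ∀ (e : OrthonormalBasis (Fin d) ℂ (EuclideanSpace ℂ (Fin d))) (g : Fin d → ℂ),
      ‖∑ k, g k • e k‖ ^ 2 = ∑ k, ‖g k‖ ^ 2 := by
    intro e g
    rw [← e.sum_sq_norm_inner_right]
    refine Finset.sum_congr rfl fun k _ => ?_
    rw [e.orthonormal.inner_right_fintype]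
  have ha : ∑ i, ‖a i‖ ^ 2 = 1 := by
    rw [← hX]
    simp only [a, nrm, RCLike.norm_conj, norm_mul, hw, one_mul]
    rw [Finset.sum_comm]
    simp [EuclideanSpace.norm_sq_eq]
  have hb : ∑ i, ‖b i‖ ^ 2 = 1 := by
    rw [← hY]
    simp only [b, nrm, RCLike.norm_conj, norm_mul, hw', one_mul]
    rw [Finset.sum_comm]
    simp [EuclideanSpace.norm_sq_eq]
  have key : ∑ k, ∑ l, (w k * w' l) * (inner ℂ (u k) (v l) * inner ℂ (Y l) (X k))
      = ∑ i, inner ℂ (a i) (b i) := by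
    simp only [a, b, sum_inner, inner_sum, inner_smul_left, inner_smul_right,
      PiLp.inner_apply (Y _) (X _), Finset.mul_sum]
    symm
    rw [Finset.sum_comm]
    conv_rhs => rw [Finset.sum_comm]
    refine Finset.sum_congr rfl fun k _ => ?_
    rw [Finset.sum_comm]
    refine Finset.sum_congr rfl fun l _ => Finset.sum_congr rfl fun i _ => ?_
    simp
    ring
  rw [key]
  calc _ ≤ ∑ i, ‖inner ℂ (a i) (b i)‖ := norm_sum_le _ _
    _ ≤ ∑ i, (‖a i‖ ^ 2 + ‖b i‖ ^ 2) / 2 := by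
      refine Finset.sum_le_sum fun i _ => (norm_inner_le_norm _ _).trans ?_
      nlinarith [sq_nonneg (‖a i‖ - ‖b i‖)]
    _ = 1 := by rw [← Finset.sum_div, Finset.sum_add_distrib, ha, hb]; norm_num

theorem half_log_aux (x : ℝ) (hx : 0 ≤ x) : Real.exp (1 / 2 * Real.log (x ^ 2)) * x ≤ x ^ 2 := by
  rcases hx.eq_or_lt with rfl | h
  · simp
  · rw [Real.log_pow]
    have : 1 / 2 * (((2 : ℕ) : ℝ) * Real.log x) = Real.log x := by push_cast; ring
    rw [this, Real.exp_log h, sq]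

theorem mu_core_s2 {d : ℕ} (u v : OrthonormalBasis (Fin d) ℂ (EuclideanSpace ℂ (Fin d)))
    (X Y : Fin d → EuclideanSpace ℂ (Fin d)) (q r : Fin d → ℝ)
    (hq : ∀ k, q k = ‖X k‖ ^ 2) (hr : ∀ k, r k = ‖Y k‖ ^ 2)
    (hX : ∑ k, q k = 1) (hY : ∑ k, r k = 1)
    (hrow : ∀ k, ∑ l, inner ℂ (u k) (v l) * inner ℂ (Y l) (X k) = (q k : ℂ))
    (hcol : ∀ l, ∑ k, inner ℂ (u k) (v l) * inner ℂ (Y l) (X k) = (r l : ℂ))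
    (c : ℝ) (hc : ∀ k l, ‖inner ℂ (u k) (v l)‖ ≤ c) :
    -2 * Real.log c ≤ ∑ k, Real.negMulLog (q k) + ∑ k, Real.negMulLog (r k) := by
  have hsum1 : ∑ k, ∑ l, inner ℂ (u k) (v l) * inner ℂ (Y l) (X k) = 1 := by
    simp only [hrow]
    exact_mod_cast hX
  have hcpos : 0 < c := by
    by_contra h
    have h0 : ∀ k l, inner ℂ (u k) (v l) = 0 := fun k l =>
      norm_le_zero_iff.1 ((hc k l).trans (not_lt.1 h))
    simp [h0] at hsum1
  let L : Fin d → Fin d → ℝ := fun k l => 1 / 2 * Real.log (q k) + 1 / 2 * Real.log (r l)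
  let M : Fin d → Fin d → ℂ := fun k l => inner ℂ (u k) (v l) * inner ℂ (Y l) (X k)
  let F : ℂ → ℂ := fun z => ∑ k, ∑ l, Complex.exp (z * (L k l : ℂ)) * M k l
  have hFd : Differentiable ℂ F := by
    simp only [F]
    fun_prop
  have hnorm : ∀ z k l, ‖Complex.exp (z * (L k l : ℂ)) * M k l‖
      = Real.exp (z.re * L k l) * ‖M k l‖ := by
    intro z k l
    rw [norm_mul, Complex.norm_exp, Complex.re_mul_ofReal]
  have hB : BddAbove ((norm ∘ F) '' Complex.HadamardThreeLines.verticalClosedStrip 0 1) := by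
    refine ⟨∑ k, ∑ l, Real.exp |L k l| * ‖M k l‖, ?_⟩
    rintro _ ⟨z, hz, rfl⟩
    obtain ⟨h0, h1⟩ : 0 ≤ z.re ∧ z.re ≤ 1 := hz
    refine (norm_sum_le _ _).trans (Finset.sum_le_sum fun k _ => ?_)
    refine (norm_sum_le _ _).trans (Finset.sum_le_sum fun l _ => ?_)
    rw [hnorm]
    gcongr
    calc z.re * L k l ≤ z.re * |L k l| := by gcongr; exact le_abs_self _
      _ ≤ 1 * |L k l| := by gcongr
      _ = _ := one_mul _
  have hA0 : ∀ z ∈ Complex.re ⁻¹' {0}, ‖F z‖ ≤ 1 := by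
    intro z hz
    have hz : z.re = 0 := hz
    have := mu_left u v X Y (by simpa [hq] using hX) (by simpa [hr] using hY)
      (fun k => Complex.exp (z * ((1 / 2 * Real.log (q k) : ℝ) : ℂ)))
      (fun l => Complex.exp (z * ((1 / 2 * Real.log (r l) : ℝ) : ℂ)))
      (fun k => by rw [Complex.norm_exp, Complex.re_mul_ofReal, hz]; simp)
      (fun k => by rw [Complex.norm_exp, Complex.re_mul_ofReal, hz]; simp)
    simp only [← Complex.exp_add, ← mul_add, ← Complex.ofReal_add] at this
    simpa only [F, L, M, mul_add] using this
  have hA1 : ∀ z ∈ Complex.re ⁻¹' {1}, ‖F z‖ ≤ c := by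
    intro z hz
    have hz : z.re = 1 := hz
    calc ‖F z‖ ≤ ∑ k, ∑ l, c * (q k * r l) := by
          refine (norm_sum_le _ _).trans (Finset.sum_le_sum fun k _ => ?_)
          refine (norm_sum_le _ _).trans (Finset.sum_le_sum fun l _ => ?_)
          rw [hnorm, hz, one_mul]
          simp only [L, M, norm_mul, Real.exp_add]
          have h1 := half_log_aux ‖X k‖ (norm_nonneg _)
          have h2 := half_log_aux ‖Y l‖ (norm_nonneg _)
          rw [← hq] at h1
          rw [← hr] at h2
          have h3 : ‖inner ℂ (Y l) (X k)‖ ≤ ‖Y l‖ * ‖X k‖ := norm_inner_le_norm _ _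
          calc _ ≤ Real.exp (1 / 2 * Real.log (q k)) * Real.exp (1 / 2 * Real.log (r l))
                * (c * (‖Y l‖ * ‖X k‖)) := by gcongr; exact hc k l
            _ = c * ((Real.exp (1 / 2 * Real.log (q k)) * ‖X k‖)
                * (Real.exp (1 / 2 * Real.log (r l)) * ‖Y l‖)) := by ring
            _ ≤ _ := by
              gcongr
              rw [hq]; positivity
      _ = c := by
        simp only [← Finset.mul_sum, hY, hX, mul_one]
  have hbound : ∀ t : ℝ, 0 ≤ t → t ≤ 1 → (F t).re ≤ c ^ t := by
    intro t h0 h1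
    have := Complex.HadamardThreeLines.norm_le_interp_of_mem_verticalClosedStrip₀₁' F
      (z := (t : ℂ)) (a := 1) (b := c) ⟨by simpa using h0, by simpa using h1⟩
      hFd.diffContOnCl hB hA0 hA1
    simp only [Real.one_rpow, one_mul, Complex.ofReal_re] at this
    exact (Complex.re_le_norm _).trans this
  have hF0 : F 0 = 1 := by simpa [F, M] using hsum1
  have hFder : HasDerivAt F (∑ k, ∑ l, (L k l : ℂ) * M k l) ((0 : ℝ) : ℂ) := by
    simp only [F]
    refine HasDerivAt.fun_sum fun k _ => HasDerivAt.fun_sum fun l _ => ?_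
    have := (((hasDerivAt_id (((0 : ℝ) : ℂ))).mul_const (L k l : ℂ)).cexp).mul_const (M k l)
    simpa using this
  have hval : ∑ k, ∑ l, (L k l : ℂ) * M k l =
      ((-(1 / 2) * (∑ k, Real.negMulLog (q k) + ∑ k, Real.negMulLog (r k)) : ℝ) : ℂ) := by
    simp only [L, Complex.ofReal_add, add_mul, Finset.sum_add_distrib]
    rw [Finset.sum_comm (f := fun k l => ((1 / 2 * Real.log (r l) : ℝ) : ℂ) * M k l)]
    simp only [← Finset.mul_sum, M, hrow, hcol]
    rw [mul_add, Finset.mul_sum, Finset.mul_sum]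
    push_cast
    simp only [Real.negMulLog]
    congr 1 <;> refine Finset.sum_congr rfl fun k _ => ?_ <;> push_cast <;> ring
  rw [hval] at hFder
  have hre := hFder.real_of_complex
  rw [Complex.ofReal_re] at hre
  have hcd : HasDerivAt (fun t : ℝ => c ^ t) (Real.log c) 0 := by
    have := (hasDerivAt_id (0 : ℝ)).const_rpow hcpos
    simpa using this
  have hlim := (hcd.sub hre).tendsto_slope_zero_right
  have hge := ge_of_tendsto hlim (b := 0) (by
    have : Set.Ioc (0 : ℝ) 1 ∈ nhdsWithin (0 : ℝ) (Set.Ioi 0) := Ioc_mem_nhdsGT one_pos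
    filter_upwards [this] with t ht
    have := hbound t ht.1.le ht.2
    have ht0 := ht.1
    simp only [Pi.sub_apply, zero_add, Complex.ofReal_zero, hF0, Real.rpow_zero, Complex.one_re,
      sub_self, sub_zero, smul_eq_mul]
    exact mul_nonneg (inv_nonneg.2 ht0.le) (by linarith))
  linarith

open scoped MatrixOrder in
theorem mu_state {d : ℕ} (ρ : Matrix (Fin d) (Fin d) ℂ)
    (hρ : ρ.PosSemidef) (htr : ρ.trace = 1)
    (u v : OrthonormalBasis (Fin d) ℂ (EuclideanSpace ℂ (Fin d)))
    (q r : Fin d → ℝ)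
    (hq : ∀ k, q k = (inner ℂ (u k) (Matrix.toEuclideanLin ρ (u k))).re)
    (hr : ∀ l, r l = (inner ℂ (v l) (Matrix.toEuclideanLin ρ (v l))).re)
    (c : ℝ) (hc : ∀ k l, ‖inner ℂ (u k) (v l)‖ ≤ c) :
    -2 * Real.log c ≤ ∑ k, Real.negMulLog (q k) + ∑ k, Real.negMulLog (r k) := by
  obtain ⟨B, hB⟩ := CStarAlgebra.nonneg_iff_eq_star_mul_self.1 hρ.nonneg
  have hBB : ∀ x y, inner ℂ (Matrix.toEuclideanLin B x) (Matrix.toEuclideanLin B y)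
      = inner ℂ x (Matrix.toEuclideanLin ρ y) := by
    intro x y
    rw [← LinearMap.adjoint_inner_right, ← Matrix.toEuclideanLin_conjTranspose_eq_adjoint, hB]
    congr 1
    simp [Matrix.toEuclideanLin_apply, Matrix.star_eq_conjTranspose]
  have hBB' : ∀ x y, inner ℂ (Matrix.toEuclideanLin B x) (Matrix.toEuclideanLin B y)
      = inner ℂ (Matrix.toEuclideanLin ρ x) y := by
    intro x y
    rw [← inner_conj_symm, hBB, inner_conj_symm]
  have hself : ∀ x, inner ℂ x (Matrix.toEuclideanLin ρ x)
      = ((‖Matrix.toEuclideanLin B x‖ ^ 2 : ℝ) : ℂ) := by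
    intro x
    rw [← hBB, inner_self_eq_norm_sq_to_K]; simp
  have hq' : ∀ k, q k = ‖Matrix.toEuclideanLin B (u k)‖ ^ 2 := fun k => by
    rw [hq, hself, Complex.ofReal_re]
  have hr' : ∀ k, r k = ‖Matrix.toEuclideanLin B (v k)‖ ^ 2 := fun k => by
    rw [hr, hself, Complex.ofReal_re]
  have htrace : ∀ e : OrthonormalBasis (Fin d) ℂ (EuclideanSpace ℂ (Fin d)),
      ∑ k, inner ℂ (e k) (Matrix.toEuclideanLin ρ (e k)) = 1 := by
    intro e
    rw [← LinearMap.trace_eq_sum_inner, Matrix.toEuclideanLin_eq_toLin, Matrix.trace_toLin_eq, htr]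
  refine mu_core_s2 u v (fun k => Matrix.toEuclideanLin B (u k))
    (fun k => Matrix.toEuclideanLin B (v k)) q r hq' hr' ?_ ?_ ?_ ?_ c hc
  · simp only [hq, ← Complex.re_sum, htrace, Complex.one_re]
  · simp only [hr, ← Complex.re_sum, htrace, Complex.one_re]
  · intro k
    simp only [hBB]
    rw [v.sum_inner_mul_inner, hself, hq']
  · intro l
    simp only [hBB', mul_comm (inner ℂ (u _) (v l))]
    rw [u.sum_inner_mul_inner, ← hBB', hBB, hself, hr']

/-- Theorem 2: thermodynamic bound for local-hidden-state models.  The average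
assisted erasure cost of any LHS model is lower bounded by the state-independent
complementarity benchmark `−log₂ c` of the two dephasing bases. -/
theorem lhs_erasure_bound
    (d : ℕ) (hd : 1 ≤ d)
    (Λ : Type*) [Fintype Λ]
    (p : Λ → ℝ) (hp : ∀ lam, 0 ≤ p lam) (hpsum : ∑ lam, p lam = 1)
    (ρ : Λ → Matrix (Fin d) (Fin d) ℂ)
    (hρ : ∀ lam, (ρ lam).PosSemidef) (htr : ∀ lam, (ρ lam).trace = 1)
    (u v : OrthonormalBasis (Fin d) ℂ (EuclideanSpace ℂ (Fin d)))
    (q r : Λ → Fin d → ℝ)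
    (hq : ∀ lam k, q lam k = (inner (𝕜 := ℂ) (u k) (Matrix.toEuclideanLin (ρ lam) (u k))).re)
    (hr : ∀ lam l, r lam l = (inner (𝕜 := ℂ) (v l) (Matrix.toEuclideanLin (ρ lam) (v l))).re)
    (c : ℝ)
    (hc : IsGreatest {x : ℝ | ∃ k l, x = ‖(inner (𝕜 := ℂ) (u k) (v l))‖} c) :
    (1 / 2) * ∑ lam, p lam * (shannonEntropy2 (q lam) + shannonEntropy2 (r lam)) ≥
      -Real.logb 2 c := by
  have hl2 : 0 < Real.log 2 := Real.log_pos one_lt_two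
  have h1 : ∀ lam, -2 * Real.logb 2 c ≤ shannonEntropy2 (q lam) + shannonEntropy2 (r lam) := by
    intro lam
    have := mu_state (ρ lam) (hρ lam) (htr lam) u v (q lam) (r lam) (hq lam) (hr lam) c
      (fun k l => hc.2 ⟨k, l, rfl⟩)
    unfold shannonEntropy2 Real.logb
    rw [← Finset.sum_div, ← Finset.sum_div, ← add_div, ← mul_div_assoc]
    gcongr
  have h2 : ∑ lam, p lam * (-2 * Real.logb 2 c) ≤
      ∑ lam, p lam * (shannonEntropy2 (q lam) + shannonEntropy2 (r lam)) :=
    Finset.sum_le_sum fun lam _ => mul_le_mul_of_nonneg_left (h1 lam) (hp lam)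
  rw [← Finset.sum_mul, hpsum] at h2
  linarith
end

section
/- Qubit LHS floor with mutually unbiased dephasings (the benchmark used for the Werner example): let Λ be a finite index set, p : Λ → ℝ a probability distribution (p(λ) ≥ 0 and Σ_λ p(λ) = 1), and for each λ let ρ_λ be a 2×2 complex matrix that is positive semidefinite with trace 1. For each λ define q_λ(k) = Re (ρ_λ)_{kk} for k : Fin 2 (computational-basis dephasing) and r_λ(ℓ) = Re ⟪h_ℓ, ρ_λ h_ℓ⟫ for ℓ : Fin 2 (Hadamard-basis dephasing), where h_0 = (1/√2)(1,1) and h_1 = (1/√2)(1,−1). Then (1/2)·Σ_λ p(λ)·(H(q_λ) + H(r_λ)) ≥ 1/2, where H is the base-2 Shannon entropy. -/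
open scoped ComplexOrder

/-- The Hadamard basis vectors `h₀ = (1,1)/√2`, `h₁ = (1,−1)/√2` of ℂ². -/
noncomputable def hadamard : Fin 2 → Fin 2 → ℂ := fun a x =>
  ((1 / Real.sqrt 2 : ℝ) : ℂ) * (if a = 1 ∧ x = 1 then -1 else 1)

open Real in
lemma aux_hasSum {z : ℝ} (hz : |z| < 1) :
    HasSum (fun k : ℕ => z ^ (2 * k + 2) * (2 / (2 * (k:ℝ) + 1) - 1 / ((k:ℝ) + 1)))
      (-(negMulLog (1 + z) + negMulLog (1 - z))) := by
  have h1 := (Real.hasSum_log_sub_log_of_abs_lt_one hz).mul_left z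
  have hz2 : |z ^ 2| < 1 := by
    rw [abs_pow]; exact pow_lt_one₀ (abs_nonneg z) hz (by norm_num)
  have h2 := Real.hasSum_pow_div_log_of_abs_lt_one hz2
  have h3 := h1.sub h2
  obtain ⟨ha, hb⟩ := abs_lt.mp hz
  have e1 : (fun k : ℕ => z ^ (2 * k + 2) * (2 / (2 * (k:ℝ) + 1) - 1 / ((k:ℝ) + 1))) =
      fun b : ℕ => z * (2 * (1 / (2 * (b:ℝ) + 1)) * z ^ (2 * b + 1)) -
        (z ^ 2) ^ (b + 1) / ((b:ℝ) + 1) := by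
    funext k
    have : (2 * (k:ℝ) + 1) ≠ 0 := by positivity
    have : ((k:ℝ) + 1) ≠ 0 := by positivity
    rw [← pow_mul]
    field_simp
    ring
  have e2 : -(negMulLog (1 + z) + negMulLog (1 - z)) =
      z * (log (1 + z) - log (1 - z)) - -log (1 - z ^ 2) := by
    have : (1 - z ^ 2) = (1 + z) * (1 - z) := by ring
    rw [this, Real.log_mul (by linarith) (by linarith), negMulLog, negMulLog]
    ring
  rw [e1, e2]
  exact h3

open Real in
lemma aux_mono {z w : ℝ} (hzw : |z| ≤ w) (hw : w < 1) :
    -(negMulLog (1 + z) + negMulLog (1 - z)) * w ^ 2 ≤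
      -(negMulLog (1 + w) + negMulLog (1 - w)) * z ^ 2 := by
  have hw0 : 0 ≤ w := (abs_nonneg z).trans hzw
  refine hasSum_le ?_ ((aux_hasSum (lt_of_le_of_lt hzw hw)).mul_right (w ^ 2))
    ((aux_hasSum (by rwa [abs_of_nonneg hw0])).mul_right (z ^ 2))
  intro k
  have hc : (0:ℝ) ≤ 2 / (2 * (k:ℝ) + 1) - 1 / ((k:ℝ) + 1) := by
    rw [sub_nonneg, div_le_div_iff₀ (by positivity) (by positivity)]
    linarith
  have hzz : z ^ 2 ≤ w ^ 2 := sq_le_sq' (by linarith [(abs_le.mp hzw).1]) (abs_le.mp hzw).2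
  have hk : (z ^ 2) ^ k ≤ (w ^ 2) ^ k := pow_le_pow_left₀ (sq_nonneg z) hzz k
  have h := mul_le_mul_of_nonneg_right hk (mul_nonneg (mul_nonneg (sq_nonneg z) (sq_nonneg w)) hc)
  simp only [pow_add, pow_mul]
  linarith

open Real in
lemma aux_bound {z : ℝ} (hz : |z| ≤ 1) :
    -(negMulLog (1 + z) + negMulLog (1 - z)) ≤ 2 * log 2 * z ^ 2 := by
  rcases hz.lt_or_eq with h | h
  · have hc1 : Continuous fun w : ℝ => -(negMulLog (1 + z) + negMulLog (1 - z)) * w ^ 2 := by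
      fun_prop
    have hc2 : Continuous fun w : ℝ => -(negMulLog (1 + w) + negMulLog (1 - w)) * z ^ 2 := by
      have := Real.continuous_negMulLog
      fun_prop
    have t1 := (hc1.tendsto 1).mono_left (nhdsWithin_le_nhds (s := Set.Iio 1))
    have t2 := (hc2.tendsto 1).mono_left (nhdsWithin_le_nhds (s := Set.Iio 1))
    have := le_of_tendsto_of_tendsto t1 t2 (by
      filter_upwards [Ioo_mem_nhdsLT h] with w hw
      exact aux_mono hw.1.le hw.2)
    norm_num [negMulLog] at this ⊢
    linarith
  · rcases (abs_eq (by norm_num)).mp h with rfl | rfl <;> norm_num [negMulLog]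

open Real in
lemma aux_ent {a b : ℝ} (ha : 0 ≤ a) (hb : 0 ≤ b) (hab : a + b = 1) :
    4 * a * b * log 2 ≤ negMulLog a + negMulLog b := by
  have h := aux_bound (z := a - b) (abs_le.mpr ⟨by linarith, by linarith⟩)
  have e1 : 1 + (a - b) = 2 * a := by linarith
  have e2 : 1 - (a - b) = 2 * b := by linarith
  rw [e1, e2, negMulLog_mul, negMulLog_mul] at h
  have e3 : negMulLog 2 = -2 * log 2 := by simp [negMulLog]
  rw [e3] at h
  have hb' : b = 1 - a := by linarith
  subst hb'
  nlinarith

lemma aux_qubit (M : Matrix (Fin 2) (Fin 2) ℂ) (hM : M.PosSemidef) (ht : M.trace = 1)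
    (q r : Fin 2 → ℝ) (hq : ∀ k, q k = (M k k).re)
    (hr : ∀ l, r l =
      (∑ k, ∑ m, (starRingEnd ℂ) (hadamard l k) * M k m * hadamard l m).re) :
    1 ≤ shannonEntropy2 q + shannonEntropy2 r := by
  have h00 : 0 ≤ (M 0 0).re := (Complex.le_def.mp (hM.diag_nonneg (i := 0))).1
  have h11 : 0 ≤ (M 1 1).re := (Complex.le_def.mp (hM.diag_nonneg (i := 1))).1
  have i00 : 0 = (M 0 0).im := (Complex.le_def.mp (hM.diag_nonneg (i := 0))).2
  have hdet := (Complex.le_def.mp hM.det_nonneg).1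
  have h10 : M 1 0 = (starRingEnd ℂ) (M 0 1) := (hM.isHermitian.apply 1 0).symm
  rw [Matrix.trace_fin_two] at ht
  have htr := congrArg Complex.re ht
  simp only [Complex.add_re, Complex.one_re] at htr
  rw [Matrix.det_fin_two, h10] at hdet
  simp [← i00] at hdet
  have hs : (1 / Real.sqrt 2) * (1 / Real.sqrt 2) = 1 / 2 := by
    rw [div_mul_div_comm, Real.mul_self_sqrt (by norm_num)]; norm_num
  have hs' : (Real.sqrt 2)⁻¹ * (Real.sqrt 2)⁻¹ = 1 / 2 := by simpa using hs
  have r0 : r 0 = 1 / 2 + (M 0 1).re := by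
    rw [hr]
    simp [hadamard, Fin.sum_univ_two, h10, ← Complex.ofReal_inv]
    linear_combination ((M 0 0).re + (M 1 1).re + 2 * (M 0 1).re) * hs' + htr / 2
  have r1 : r 1 = 1 / 2 - (M 0 1).re := by
    rw [hr]
    simp [hadamard, Fin.sum_univ_two, h10, ← Complex.ofReal_inv]
    linear_combination ((M 0 0).re + (M 1 1).re - 2 * (M 0 1).re) * hs' + htr / 2
  have hx : (M 0 1).re ^ 2 ≤ (M 0 0).re * (M 1 1).re := by
    nlinarith [sq_nonneg (M 0 1).im]
  have hb : (M 0 0).re = 1 - (M 1 1).re := by linarith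
  have hx4 : (M 0 1).re ^ 2 ≤ (1 / 2) ^ 2 := by
    rw [hb] at hx
    nlinarith [sq_nonneg ((M 1 1).re - 1 / 2)]
  have hxa := abs_le.mp (abs_le_of_sq_le_sq hx4 (by norm_num))
  have e1 := aux_ent h00 h11 htr
  have e2 := aux_ent (a := 1 / 2 + (M 0 1).re) (b := 1 / 2 - (M 0 1).re)
    (by linarith [hxa.1]) (by linarith [hxa.2]) (by ring)
  have hl : 0 < Real.log 2 := Real.log_pos (by norm_num)
  have h5 := mul_le_mul_of_nonneg_right hx hl.le
  simp only [shannonEntropy2, Fin.sum_univ_two, hq, r0, r1]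
  rw [← add_div, ← add_div, ← add_div, le_div_iff₀ hl]
  linarith

/-- Qubit LHS floor with mutually unbiased dephasings: for any local-hidden-state
ensemble of qubit density matrices, the average assisted erasure cost with uniform
random dephasing in the computational and Hadamard bases is at least `1/2` bit. -/
theorem qubit_lhs_floor
    (Λ : Type*) [Fintype Λ]
    (p : Λ → ℝ) (hp : ∀ lam, 0 ≤ p lam) (hpsum : ∑ lam, p lam = 1)
    (ρ : Λ → Matrix (Fin 2) (Fin 2) ℂ)
    (hρ : ∀ lam, (ρ lam).PosSemidef) (htr : ∀ lam, (ρ lam).trace = 1)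
    (q r : Λ → Fin 2 → ℝ)
    (hq : ∀ lam k, q lam k = (ρ lam k k).re)
    (hr : ∀ lam l, r lam l =
      (∑ k, ∑ m, (starRingEnd ℂ) (hadamard l k) * ρ lam k m * hadamard l m).re) :
    (1 / 2) * ∑ lam, p lam * (shannonEntropy2 (q lam) + shannonEntropy2 (r lam)) ≥
      1 / 2 := by
  have h : ∑ lam, p lam ≤
      ∑ lam, p lam * (shannonEntropy2 (q lam) + shannonEntropy2 (r lam)) := by
    refine Finset.sum_le_sum fun lam _ => ?_
    exact le_mul_of_one_le_right (hp lam)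
      (aux_qubit (ρ lam) (hρ lam) (htr lam) _ _ (hq lam) (hr lam))
  rw [hpsum] at h
  linarith
end
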